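/- arXiv:1712.03205 — 2 statements merged into one kernel-verified Lean document; each statement's English description precedes it below -/
import Mathlib

section
/- Let τ ∈ ℂ with Im τ > 0 and let ξ, η ∈ ℂ satisfy θ(ξ, τ) ≠ 0 and θ(η, τ) ≠ 0. Then for all integers l and m, the Kronecker function satisfies the lattice quasi-periodicity F(ξ + l + m·τ, η, τ) = exp(−2πi m η) · F(ξ, η, τ). -/
open Complex

/-- The "two thirds of the Jacobi triple product formula":
`θ(ξ, τ) = q^{1/12} (z^{1/2} - z^{-1/2}) ∏_{j≥1} (1 - qʲz) ∏_{j≥1} (1 - qʲz⁻¹)`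
with `q = exp(2πiτ)`, `z = exp(2πiξ)`. -/
noncomputable def theta (ξ τ : ℂ) : ℂ :=
  Complex.exp ((Real.pi : ℂ) * Complex.I * τ / 6) *
    (Complex.exp ((Real.pi : ℂ) * Complex.I * ξ) -
      Complex.exp (-((Real.pi : ℂ) * Complex.I * ξ))) *
    (∏' j : ℕ, (1 - Complex.exp (2 * (Real.pi : ℂ) * Complex.I * (((j : ℂ) + 1) * τ + ξ)))) *
    (∏' j : ℕ, (1 - Complex.exp (2 * (Real.pi : ℂ) * Complex.I * (((j : ℂ) + 1) * τ - ξ))))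

/-- The Kronecker function `F(ξ, η, τ) = θ′(0, τ) · θ(ξ + η, τ) / (θ(ξ, τ) · θ(η, τ))`,
where `θ′(0, τ)` is the derivative of `ξ ↦ θ(ξ, τ)` at `ξ = 0`. -/
noncomputable def kronF (ξ η τ : ℂ) : ℂ :=
  deriv (fun z => theta z τ) 0 * theta (ξ + η) τ / (theta ξ τ * theta η τ)

noncomputable def thP (τ x : ℂ) : ℂ :=
  ∏' j : ℕ, (1 - Complex.exp (2 * (Real.pi : ℂ) * Complex.I * (((j : ℂ) + 1) * τ + x)))

lemma thP_step (τ : ℂ) (hτ : 0 < τ.im) (x : ℂ) :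
    thP τ x = (1 - Complex.exp (2 * (Real.pi : ℂ) * Complex.I * (τ + x))) * thP τ (x + τ) := by
  have key : ∀ y : ℂ, Multipliable (fun j : ℕ =>
      (1 - Complex.exp (2 * (Real.pi : ℂ) * Complex.I * (((j : ℂ) + 1) * τ + y)))) := by
    intro y
    have hq : ‖Complex.exp (2 * (Real.pi : ℂ) * Complex.I * τ)‖ < 1 := by
      rw [Complex.norm_exp, Real.exp_lt_one_iff]
      have : (2 * (Real.pi : ℂ) * Complex.I * τ).re = -(2 * Real.pi * τ.im) := by
        simp
      rw [this]
      have := Real.pi_pos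
      have : 0 < 2 * Real.pi * τ.im := by positivity
      linarith
    have hs := ((summable_geometric_of_lt_one (norm_nonneg _) hq).mul_left
      ‖Complex.exp (2 * (Real.pi : ℂ) * Complex.I * (τ + y))‖)
    have h := multipliable_one_add_of_summable (R := ℂ) (f := fun j : ℕ =>
      -Complex.exp (2 * (Real.pi : ℂ) * Complex.I * (((j : ℂ) + 1) * τ + y))) (by
        refine hs.congr ?_
        intro j
        rw [norm_neg, ← norm_pow, ← norm_mul, ← Complex.exp_nat_mul, ← Complex.exp_add]
        congr 2
        ring)
    simpa only [sub_eq_add_neg] using h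
  have hsh : (fun j : ℕ => 1 - Complex.exp (2 * (Real.pi : ℂ) * Complex.I *
      ((((j + 1 : ℕ) : ℂ) + 1) * τ + x))) = (fun j : ℕ =>
      1 - Complex.exp (2 * (Real.pi : ℂ) * Complex.I * (((j : ℂ) + 1) * τ + (x + τ)))) := by
    funext j
    congr 3
    push_cast
    ring
  unfold thP
  rw [tprod_eq_zero_mul' (by rw [hsh]; exact key (x + τ)), hsh]
  simp

lemma theta_eq (ξ τ : ℂ) : theta ξ τ = Complex.exp ((Real.pi : ℂ) * Complex.I * τ / 6) *
    (Complex.exp ((Real.pi : ℂ) * Complex.I * ξ) -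
      Complex.exp (-((Real.pi : ℂ) * Complex.I * ξ))) * thP τ ξ * thP τ (-ξ) := by
  simp only [theta, thP, sub_eq_add_neg]

lemma thP_one (τ x : ℂ) : thP τ (x + 1) = thP τ x := by
  unfold thP
  congr 1
  funext j
  rw [← Complex.exp_periodic (2 * (Real.pi : ℂ) * Complex.I * (((j : ℂ) + 1) * τ + x))]
  congr 2
  ring

lemma theta_one (τ ξ : ℂ) : theta (ξ + 1) τ = -theta ξ τ := by
  rw [theta_eq, theta_eq, thP_one, ← thP_one τ (-(ξ + 1))]
  have e1 : Complex.exp ((Real.pi : ℂ) * Complex.I * (ξ + 1))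
      = -Complex.exp ((Real.pi : ℂ) * Complex.I * ξ) := by
    rw [mul_add, Complex.exp_add, mul_one, Complex.exp_pi_mul_I]; ring
  have e2 : Complex.exp (-((Real.pi : ℂ) * Complex.I * (ξ + 1)))
      = -Complex.exp (-((Real.pi : ℂ) * Complex.I * ξ)) := by
    rw [Complex.exp_neg, e1, Complex.exp_neg, inv_neg]
  rw [e1, e2, show -(ξ + 1) + 1 = -ξ by ring]
  ring

lemma theta_tau (τ : ℂ) (hτ : 0 < τ.im) (ξ : ℂ) : theta (ξ + τ) τ =
    -Complex.exp (-(2 * (Real.pi : ℂ) * Complex.I * ξ + Real.pi * Complex.I * τ)) * theta ξ τ := by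
  rw [theta_eq, theta_eq, thP_step τ hτ ξ, thP_step τ hτ (-(ξ + τ)),
    show -(ξ + τ) + τ = -ξ by ring, show τ + -(ξ + τ) = -ξ by ring]
  have a1 : Complex.exp ((Real.pi : ℂ) * Complex.I * (ξ + τ)) =
    Complex.exp ((Real.pi : ℂ) * Complex.I * ξ) * Complex.exp ((Real.pi : ℂ) * Complex.I * τ) := by
    rw [← Complex.exp_add]; congr 1; ring
  have a2 : Complex.exp (2 * (Real.pi : ℂ) * Complex.I * (τ + ξ)) =
    Complex.exp ((Real.pi : ℂ) * Complex.I * ξ) ^ 2 *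
      Complex.exp ((Real.pi : ℂ) * Complex.I * τ) ^ 2 := by
    rw [← Complex.exp_nat_mul, ← Complex.exp_nat_mul, ← Complex.exp_add]
    congr 1; push_cast; ring
  have a3 : Complex.exp (2 * (Real.pi : ℂ) * Complex.I * (-ξ)) =
    (Complex.exp ((Real.pi : ℂ) * Complex.I * ξ) ^ 2)⁻¹ := by
    rw [← Complex.exp_nat_mul, ← Complex.exp_neg]
    congr 1; push_cast; ring
  have a4 : Complex.exp (-(2 * (Real.pi : ℂ) * Complex.I * ξ + Real.pi * Complex.I * τ)) =
    (Complex.exp ((Real.pi : ℂ) * Complex.I * ξ) ^ 2 *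
      Complex.exp ((Real.pi : ℂ) * Complex.I * τ))⁻¹ := by
    rw [← Complex.exp_nat_mul, ← Complex.exp_add, ← Complex.exp_neg]
    congr 1; push_cast; ring
  rw [Complex.exp_neg, Complex.exp_neg ((Real.pi : ℂ) * Complex.I * ξ), a1, a2, a3, a4]
  have u0 := Complex.exp_ne_zero ((Real.pi : ℂ) * Complex.I * ξ)
  have v0 := Complex.exp_ne_zero ((Real.pi : ℂ) * Complex.I * τ)
  generalize Complex.exp ((Real.pi : ℂ) * Complex.I * ξ) = u at *
  generalize Complex.exp ((Real.pi : ℂ) * Complex.I * τ) = v at *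
  field_simp
  ring

lemma kronF_one (τ ξ η : ℂ) : kronF (ξ + 1) η τ = kronF ξ η τ := by
  unfold kronF
  rw [show ξ + 1 + η = ξ + η + 1 by ring, theta_one, theta_one, mul_neg, neg_mul, neg_div_neg_eq]

lemma kronF_tau (τ : ℂ) (hτ : 0 < τ.im) (ξ η : ℂ) : kronF (ξ + τ) η τ =
    Complex.exp (-(2 * (Real.pi : ℂ) * Complex.I * η)) * kronF ξ η τ := by
  unfold kronF
  rw [show ξ + τ + η = ξ + η + τ by ring, theta_tau τ hτ, theta_tau τ hτ]
  have : Complex.exp (-(2 * (Real.pi : ℂ) * Complex.I * (ξ + η) + Real.pi * Complex.I * τ)) =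
      Complex.exp (-(2 * (Real.pi : ℂ) * Complex.I * η)) *
      Complex.exp (-(2 * (Real.pi : ℂ) * Complex.I * ξ + Real.pi * Complex.I * τ)) := by
    rw [← Complex.exp_add]; congr 1; ring
  rw [this]
  have w0 := Complex.exp_ne_zero (-(2 * (Real.pi : ℂ) * Complex.I * ξ + Real.pi * Complex.I * τ))
  generalize Complex.exp (-(2 * (Real.pi : ℂ) * Complex.I * ξ + Real.pi * Complex.I * τ)) = w at *
  generalize Complex.exp (-(2 * (Real.pi : ℂ) * Complex.I * η)) = e
  rw [show ∀ d a b c : ℂ, d * (-(e * w) * a) / (-w * b * c) = (-w) * (e * (d * a)) / (-w * (b * c))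
    by intros; congr 1 <;> ring, mul_div_mul_left _ _ (neg_ne_zero.mpr w0), mul_div_assoc]

lemma kronF_int (τ ξ η : ℂ) (l : ℤ) : kronF (ξ + l) η τ = kronF ξ η τ := by
  induction l using Int.induction_on with
  | zero => simp
  | succ n ih =>
    rw [← ih, ← kronF_one τ (ξ + ((n : ℤ) : ℂ))]; congr 1; push_cast; ring
  | pred n ih =>
    rw [← ih, ← kronF_one]; congr 1; push_cast; ring

/-- lattice quasi-periodicity
`F(ξ + l + mτ, η, τ) = exp(-2πimη) · F(ξ, η, τ)` for all integers `l`, `m`. -/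
theorem stmt_11 (τ : ℂ) (hτ : 0 < τ.im) (ξ η : ℂ)
    (hξ : theta ξ τ ≠ 0) (hη : theta η τ ≠ 0) (l m : ℤ) :
    kronF (ξ + (l : ℂ) + (m : ℂ) * τ) η τ =
      Complex.exp (-(2 * (Real.pi : ℂ) * Complex.I * (m : ℂ) * η)) * kronF ξ η τ := by
  have main : ∀ ζ : ℂ, kronF (ζ + (m : ℂ) * τ) η τ =
      Complex.exp (-(2 * (Real.pi : ℂ) * Complex.I * (m : ℂ) * η)) * kronF ζ η τ := by
    intro ζ
    induction m using Int.induction_on with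
    | zero => simp
    | succ n ih =>
      have h := kronF_tau τ hτ (ζ + ((n : ℤ) : ℂ) * τ) η
      rw [ih, ← mul_assoc, ← Complex.exp_add] at h
      convert h using 2
      · push_cast; ring
      · congr 1; push_cast; ring
    | pred n ih =>
      have h := kronF_tau τ hτ (ζ + ((-(n : ℤ) - 1 : ℤ) : ℂ) * τ) η
      rw [show ζ + ((-(n : ℤ) - 1 : ℤ) : ℂ) * τ + τ = ζ + ((-(n : ℤ) : ℤ) : ℂ) * τ by
        push_cast; ring, ih] at h
      apply mul_left_cancel₀ (Complex.exp_ne_zero (-(2 * (Real.pi : ℂ) * Complex.I * η)))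
      rw [← h, ← mul_assoc, ← Complex.exp_add]
      congr 2
      push_cast; ring
  rw [main, kronF_int]
end

section
/- Fix an integer n ≥ 1. Let P_n be the quotient of the free Lie algebra over ℚ on generators X_1, …, X_n, Y_1, …, Y_n by the Lie ideal generated by the relators: ⁅X_i, X_j⁆ and ⁅Y_i, Y_j⁆ for i < j; ⁅X_i, Y_j⁆ − ⁅X_j, Y_i⁆ for i < j; ⁅⁅X_j, Y_i⁆, Y_i + Y_j⁆ and ⁅X_j + X_i, ⁅Y_i, X_j⁆⁆ for i < j; ⁅Y_k, ⁅Y_i, X_j⁆⁆ and ⁅X_k, ⁅Y_i, X_j⁆⁆ for i < j < k. Then the assignment sending the generator X_i of P_n to the class of X_i and the generator Y_i to the class of Y_i (for 1 ≤ i ≤ n, viewed among the n+1 indices of t̄_{1,n+1}) determines a well-defined Lie algebra homomorphism P_n → t̄_{1,n+1}, and this homomorphism is an isomorphism; i.e. t̄_{1,n+1} admits the presentation P_n. -/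
/-- Generators of the Lie algebra `t_{1,n}`: `X_i`, `Y_i` (`i ∈ Fin n`), and
`t_{ij}` for `i ≠ j`. -/
abbrev ElGen (n : ℕ) : Type := Fin n ⊕ Fin n ⊕ {p : Fin n × Fin n // p.1 ≠ p.2}

/-- The generator `X_i` of the free Lie algebra. -/
noncomputable def genX {n : ℕ} (i : Fin n) : FreeLieAlgebra ℚ (ElGen n) :=
  FreeLieAlgebra.of ℚ (Sum.inl i)

/-- The generator `Y_i` of the free Lie algebra. -/
noncomputable def genY {n : ℕ} (i : Fin n) : FreeLieAlgebra ℚ (ElGen n) :=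
  FreeLieAlgebra.of ℚ (Sum.inr (Sum.inl i))

/-- The generator `t_{ij}` (`i ≠ j`) of the free Lie algebra. -/
noncomputable def genT {n : ℕ} (i j : Fin n) (h : i ≠ j) : FreeLieAlgebra ℚ (ElGen n) :=
  FreeLieAlgebra.of ℚ (Sum.inr (Sum.inr ⟨(i, j), h⟩))

/-- The relators defining `t_{1,n}`. -/
def t1Rel (n : ℕ) : Set (FreeLieAlgebra ℚ (ElGen n)) :=
  -- t_{ij} = t_{ji}
  {z | ∃ i j, ∃ h : i ≠ j, z = genT i j h - genT j i h.symm} ∪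
  -- t_{ij} = ⁅X_i, Y_j⁆
  {z | ∃ i j, ∃ h : i ≠ j, z = genT i j h - ⁅genX i, genY j⁆} ∪
  -- ⁅X_i, X_j⁆ = 0, ⁅Y_i, Y_j⁆ = 0
  {z | ∃ i j, i ≠ j ∧ z = ⁅genX i, genX j⁆} ∪
  {z | ∃ i j, i ≠ j ∧ z = ⁅genY i, genY j⁆} ∪
  -- ⁅X_i, Y_i⁆ = -Σ_{j ≠ i} t_{ij}
  {z | ∃ i, z = ⁅genX i, genY i⁆ + ∑ j : Fin n, if h : i ≠ j then genT i j h else 0} ∪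
  -- ⁅t_{ij}, t_{ik} + t_{jk}⁆ = 0 for i, j, k distinct
  {z | ∃ i j k, ∃ (hij : i ≠ j) (hik : i ≠ k) (hjk : j ≠ k),
    z = ⁅genT i j hij, genT i k hik + genT j k hjk⁆} ∪
  -- ⁅t_{ij}, t_{kl}⁆ = 0 for i, j, k, l distinct
  {z | ∃ i j k l, ∃ (hij : i ≠ j) (hkl : k ≠ l),
    i ≠ k ∧ i ≠ l ∧ j ≠ k ∧ j ≠ l ∧ z = ⁅genT i j hij, genT k l hkl⁆} ∪
  -- ⁅X_i, t_{jk}⁆ = 0, ⁅Y_i, t_{jk}⁆ = 0 for i, j, k distinct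
  {z | ∃ i j k, ∃ hjk : j ≠ k, i ≠ j ∧ i ≠ k ∧ z = ⁅genX i, genT j k hjk⁆} ∪
  {z | ∃ i j k, ∃ hjk : j ≠ k, i ≠ j ∧ i ≠ k ∧ z = ⁅genY i, genT j k hjk⁆} ∪
  -- ⁅X_i + X_j, t_{ij}⁆ = 0, ⁅Y_i + Y_j, t_{ij}⁆ = 0 for i ≠ j
  {z | ∃ i j, ∃ h : i ≠ j, z = ⁅genX i + genX j, genT i j h⁆} ∪
  {z | ∃ i j, ∃ h : i ≠ j, z = ⁅genY i + genY j, genT i j h⁆}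

/-- The Lie ideal generated by the relators of `t_{1,n}`. -/
noncomputable def t1Ideal (n : ℕ) : LieIdeal ℚ (FreeLieAlgebra ℚ (ElGen n)) :=
  LieSubmodule.lieSpan ℚ (FreeLieAlgebra ℚ (ElGen n)) (t1Rel n)

/-- The Lie algebra `t_{1,n}`. -/
abbrev t1 (n : ℕ) : Type _ := FreeLieAlgebra ℚ (ElGen n) ⧸ t1Ideal n

/-- The quotient map onto `t_{1,n}`. -/
noncomputable def t1Mk (n : ℕ) : FreeLieAlgebra ℚ (ElGen n) → t1 n :=
  LieSubmodule.Quotient.mk (N := t1Ideal n)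

/-- The Lie ideal of `t_{1,n}` generated by `Σ X_i` and `Σ Y_i`. -/
noncomputable def centralIdeal (n : ℕ) : LieIdeal ℚ (t1 n) :=
  LieSubmodule.lieSpan ℚ (t1 n)
    {t1Mk n (∑ i : Fin n, genX i), t1Mk n (∑ i : Fin n, genY i)}

/-- The Lie algebra `t̄_{1,n}`, the quotient of `t_{1,n}` by the central elements
`Σ X_i` and `Σ Y_i`. -/
abbrev t1Bar (n : ℕ) : Type _ := t1 n ⧸ centralIdeal n

/-- The canonical map from the free Lie algebra onto `t̄_{1,n}`. -/
noncomputable def t1BarMk (n : ℕ) : FreeLieAlgebra ℚ (ElGen n) → t1Bar n :=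
  fun x => LieSubmodule.Quotient.mk (N := centralIdeal n) (t1Mk n x)

/-- Generators of the presentation `P_n`: `X_i` and `Y_i` for `i ∈ Fin n`. -/
abbrev PGen (n : ℕ) : Type := Fin n ⊕ Fin n

/-- The generator `X_i` of the free Lie algebra on `PGen n`. -/
noncomputable def pX {n : ℕ} (i : Fin n) : FreeLieAlgebra ℚ (PGen n) :=
  FreeLieAlgebra.of ℚ (Sum.inl i)

/-- The generator `Y_i` of the free Lie algebra on `PGen n`. -/
noncomputable def pY {n : ℕ} (i : Fin n) : FreeLieAlgebra ℚ (PGen n) :=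
  FreeLieAlgebra.of ℚ (Sum.inr i)

/-- The relators defining the presentation `P_n`. -/
def pRel (n : ℕ) : Set (FreeLieAlgebra ℚ (PGen n)) :=
  -- ⁅X_i, X_j⁆ and ⁅Y_i, Y_j⁆ for i < j
  {z | ∃ i j, i < j ∧ z = ⁅pX i, pX j⁆} ∪
  {z | ∃ i j, i < j ∧ z = ⁅pY i, pY j⁆} ∪
  -- ⁅X_i, Y_j⁆ − ⁅X_j, Y_i⁆ for i < j
  {z | ∃ i j, i < j ∧ z = ⁅pX i, pY j⁆ - ⁅pX j, pY i⁆} ∪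
  -- ⁅⁅X_j, Y_i⁆, Y_i + Y_j⁆ and ⁅X_j + X_i, ⁅Y_i, X_j⁆⁆ for i < j
  {z | ∃ i j, i < j ∧ z = ⁅⁅pX j, pY i⁆, pY i + pY j⁆} ∪
  {z | ∃ i j, i < j ∧ z = ⁅pX j + pX i, ⁅pY i, pX j⁆⁆} ∪
  -- ⁅Y_k, ⁅Y_i, X_j⁆⁆ and ⁅X_k, ⁅Y_i, X_j⁆⁆ for i < j < k
  {z | ∃ i j k, i < j ∧ j < k ∧ z = ⁅pY k, ⁅pY i, pX j⁆⁆} ∪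
  {z | ∃ i j k, i < j ∧ j < k ∧ z = ⁅pX k, ⁅pY i, pX j⁆⁆}

/-- The Lie ideal generated by the relators of `P_n`. -/
noncomputable def pIdeal (n : ℕ) : LieIdeal ℚ (FreeLieAlgebra ℚ (PGen n)) :=
  LieSubmodule.lieSpan ℚ (FreeLieAlgebra ℚ (PGen n)) (pRel n)

/-- The presented Lie algebra `P_n`. -/
abbrev PAlg (n : ℕ) : Type _ := FreeLieAlgebra ℚ (PGen n) ⧸ pIdeal n

/-- The quotient map onto `P_n`. -/
noncomputable def pMk (n : ℕ) : FreeLieAlgebra ℚ (PGen n) → PAlg n :=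
  LieSubmodule.Quotient.mk (N := pIdeal n)

section Helpers

variable {L L' : Type*} [LieRing L] [LieAlgebra ℚ L] [LieRing L'] [LieAlgebra ℚ L']

/-- The quotient map as a Lie homomorphism. -/
noncomputable def qmk (I : LieIdeal ℚ L) : L →ₗ⁅ℚ⁆ L ⧸ I :=
  { (I.toSubmodule.mkQ : L →ₗ[ℚ] L ⧸ I.toSubmodule) with
    toFun := LieSubmodule.Quotient.mk
    map_lie' := fun {_ _} => rfl }

theorem qmk_surj (I : LieIdeal ℚ L) : Function.Surjective (qmk I) := Quot.mk_surjective

theorem qmk_eq_zero (S : Set L) {z : L} (h : z ∈ S) :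
    qmk (LieSubmodule.lieSpan ℚ L S) z = 0 :=
  LieSubmodule.Quotient.mk_eq_zero'.2 (LieSubmodule.subset_lieSpan h)

theorem exists_qlift (S : Set L) (f : L →ₗ⁅ℚ⁆ L') (h : ∀ z ∈ S, f z = 0) :
    ∃ g : (L ⧸ LieSubmodule.lieSpan ℚ L S) →ₗ⁅ℚ⁆ L',
      ∀ z, g (qmk (LieSubmodule.lieSpan ℚ L S) z) = f z := by
  have hk : LieSubmodule.lieSpan ℚ L S ≤ f.ker :=
    LieSubmodule.lieSpan_le.2 fun z hz => (LieHom.mem_ker).2 (h z hz)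
  let g0 : (L ⧸ (LieSubmodule.lieSpan ℚ L S).toSubmodule) →ₗ[ℚ] L' :=
    Submodule.liftQ _ (f : L →ₗ[ℚ] L') (fun z hz => (LieHom.mem_ker).1 (hk hz))
  have hg0 : ∀ z, g0 (Submodule.Quotient.mk z) = f z := fun z => rfl
  refine ⟨{ toFun := fun z => g0 z
            map_add' := fun a b => map_add g0 a b
            map_smul' := fun c a => map_smul g0 c a
            map_lie' := ?_ }, fun z => hg0 z⟩
  intro a b
  obtain ⟨a, rfl⟩ := qmk_surj _ a
  obtain ⟨b, rfl⟩ := qmk_surj _ b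
  exact LieHom.map_lie f a b

end Helpers

section Ext

variable {L : Type*} [LieRing L] {n : ℕ}

theorem ext_comm {x : Fin n → L} {X : Fin (n + 1) → L}
    (hXc : ∀ i : Fin n, X i.castSucc = x i) (hXl : X (Fin.last n) = -∑ i, x i)
    (hxx : ∀ i j, ⁅x i, x j⁆ = 0) (i j : Fin (n + 1)) : ⁅X i, X j⁆ = 0 := by
  induction i using Fin.lastCases <;> induction j using Fin.lastCases <;>
    simp [hXc, hXl, lie_sum, sum_lie, hxx]

theorem ext_symm {x y : Fin n → L} {X Y : Fin (n + 1) → L}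
    (hXc : ∀ i : Fin n, X i.castSucc = x i) (hXl : X (Fin.last n) = -∑ i, x i)
    (hYc : ∀ i : Fin n, Y i.castSucc = y i) (hYl : Y (Fin.last n) = -∑ i, y i)
    (hs : ∀ i j, ⁅x i, y j⁆ = ⁅x j, y i⁆) (i j : Fin (n + 1)) : ⁅X i, Y j⁆ = ⁅X j, Y i⁆ := by
  induction i using Fin.lastCases <;> induction j using Fin.lastCases <;>
    simp only [hXc, hXl, hYc, hYl, lie_sum, sum_lie, neg_lie, lie_neg]
  · exact congrArg _ (Finset.sum_congr rfl fun _ _ => hs _ _)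
  · exact congrArg _ (Finset.sum_congr rfl fun _ _ => hs _ _)
  · exact hs _ _

theorem ext_A {x y : Fin n → L} {X Y : Fin (n + 1) → L}
    (hXc : ∀ i : Fin n, X i.castSucc = x i) (hXl : X (Fin.last n) = -∑ i, x i)
    (hYc : ∀ i : Fin n, Y i.castSucc = y i) (hYl : Y (Fin.last n) = -∑ i, y i)
    (hxx : ∀ i j, ⁅x i, x j⁆ = 0)
    (hs : ∀ i j, ⁅x i, y j⁆ = ⁅x j, y i⁆)
    (hA : ∀ i j k, i ≠ j → k ≠ i → k ≠ j → ⁅x k, ⁅x i, y j⁆⁆ = 0)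
    (hB : ∀ i j, i ≠ j → ⁅x i + x j, ⁅x i, y j⁆⁆ = 0)
    (i j k : Fin (n + 1)) (hij : i ≠ j) (hki : k ≠ i) (hkj : k ≠ j) :
    ⁅X k, ⁅X i, Y j⁆⁆ = 0 := by
  have hsum : ∀ i j : Fin n, i ≠ j → ∑ k, ⁅x k, ⁅x i, y j⁆⁆ = 0 := by
    intro i j hij
    rw [Finset.sum_eq_add i j hij (fun k _ hk => hA i j k hij hk.1 hk.2) (by simp) (by simp),
      ← add_lie]
    exact hB i j hij
  have hcomm : ∀ i j (z : L), ⁅x i, ⁅x j, z⁆⁆ = ⁅x j, ⁅x i, z⁆⁆ := by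
    intro i j z
    rw [leibniz_lie, hxx, zero_lie, zero_add]
  have hS := ext_symm hXc hXl hYc hYl hs
  -- the case of `last` as one of the lower indices
  have key : ∀ k j : Fin n, k ≠ j → ⁅X k.castSucc, ⁅X (Fin.last n), Y j.castSucc⁆⁆ = 0 := by
    intro k j hkj
    rw [hXc, hXl, hYc, neg_lie, lie_neg, sum_lie, lie_sum, neg_eq_zero,
      Finset.sum_congr rfl (fun l _ => hcomm k l (y j))]
    exact hsum k j hkj
  induction i using Fin.lastCases with
  | last =>
    induction j using Fin.lastCases with
    | last => exact absurd rfl hij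
    | cast j =>
      induction k using Fin.lastCases with
      | last => exact absurd rfl hki
      | cast k => exact key k j (fun h => hkj (by rw [h]))
  | cast i =>
    induction j using Fin.lastCases with
    | last =>
      induction k using Fin.lastCases with
      | last => exact absurd rfl hkj
      | cast k => rw [hS]; exact key k i (fun h => hki (by rw [h]))
    | cast j =>
      have hij' : i ≠ j := fun h => hij (by rw [h])
      induction k using Fin.lastCases with
      | last =>
        rw [hXc, hXl, hYc, neg_lie, sum_lie, hsum i j hij', neg_zero]
      | cast k =>
        rw [hXc, hXc, hYc]
        exact hA i j k hij' (fun h => hki (by rw [h])) (fun h => hkj (by rw [h]))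

theorem ext_B {X Y : Fin n → L} (h0 : ∑ i, X i = 0)
    (hA : ∀ i j k, i ≠ j → k ≠ i → k ≠ j → ⁅X k, ⁅X i, Y j⁆⁆ = 0)
    (i j : Fin n) (hij : i ≠ j) : ⁅X i + X j, ⁅X i, Y j⁆⁆ = 0 := by
  have h : ∑ k, ⁅X k, ⁅X i, Y j⁆⁆ = 0 := by rw [← sum_lie, h0, zero_lie]
  rwa [Finset.sum_eq_add i j hij (fun k _ hk => hA i j k hij hk.1 hk.2) (by simp) (by simp),
      ← add_lie] at h

/-- from the sorted relations to all of them -/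
theorem sorted_A {x y : Fin n → L}
    (hxx : ∀ i j, ⁅x i, x j⁆ = 0)
    (hs : ∀ i j, ⁅x i, y j⁆ = ⁅x j, y i⁆)
    (hA : ∀ i j k, i < j → j < k → ⁅x k, ⁅x i, y j⁆⁆ = 0)
    (i j k : Fin n) (hij : i ≠ j) (hki : k ≠ i) (hkj : k ≠ j) : ⁅x k, ⁅x i, y j⁆⁆ = 0 := by
  have h1 : ∀ i j k, ⁅x k, ⁅x i, y j⁆⁆ = ⁅x i, ⁅x k, y j⁆⁆ := by
    intro i j k
    rw [leibniz_lie, hxx, zero_lie, zero_add]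
  have h2 : ∀ i j k, ⁅x k, ⁅x i, y j⁆⁆ = ⁅x k, ⁅x j, y i⁆⁆ := by
    intro i j k; rw [hs]
  rcases lt_or_gt_of_ne hij with a | a <;> rcases lt_or_gt_of_ne hki with b | b <;>
    rcases lt_or_gt_of_ne hkj with c | c
  · rw [h1, h2, h1, h2, h1, h2, h1, h2]; grind
  all_goals grind

end Ext

section Homs

/-- The canonical map to `t̄` as a Lie homomorphism. -/
noncomputable def barHom (n : ℕ) : FreeLieAlgebra ℚ (ElGen n) →ₗ⁅ℚ⁆ t1Bar n :=
  (qmk (centralIdeal n)).comp (qmk (t1Ideal n))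

theorem barHom_apply (n : ℕ) (z) : barHom n z = t1BarMk n z := rfl

theorem barHom_rel (n : ℕ) {z} (hz : z ∈ t1Rel n) : barHom n z = 0 := by
  have h : qmk (t1Ideal n) z = 0 := qmk_eq_zero (t1Rel n) hz
  change qmk (centralIdeal n) (qmk (t1Ideal n) z) = 0
  rw [h, map_zero]

theorem barHom_sumX (n : ℕ) : ∑ i : Fin n, barHom n (genX i) = 0 := by
  rw [← map_sum]
  exact qmk_eq_zero (L := t1 n) _ (by left; rfl)

theorem barHom_sumY (n : ℕ) : ∑ i : Fin n, barHom n (genY i) = 0 := by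
  rw [← map_sum]
  exact qmk_eq_zero (L := t1 n) _ (by right; rfl)

theorem barHom_surj (n : ℕ) : Function.Surjective (barHom n) :=
  (qmk_surj (centralIdeal n)).comp (qmk_surj (t1Ideal n))

theorem exists_barLift {L' : Type*} [LieRing L'] [LieAlgebra ℚ L'] (n : ℕ)
    (f : FreeLieAlgebra ℚ (ElGen n) →ₗ⁅ℚ⁆ L') (h : ∀ z ∈ t1Rel n, f z = 0)
    (hX : ∑ i : Fin n, f (genX i) = 0) (hY : ∑ i : Fin n, f (genY i) = 0) :
    ∃ g : t1Bar n →ₗ⁅ℚ⁆ L', ∀ z, g (barHom n z) = f z := by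
  obtain ⟨g, hg⟩ : ∃ g : t1 n →ₗ⁅ℚ⁆ L', ∀ z, g (t1Mk n z) = f z := exists_qlift (t1Rel n) f h
  obtain ⟨g', hg'⟩ : ∃ g' : t1Bar n →ₗ⁅ℚ⁆ L', ∀ z, g' (qmk (centralIdeal n) z) = g z := by
    refine exists_qlift (L := t1 n) _ g ?_
    rintro z (rfl | rfl)
    · rw [hg, map_sum, hX]
    · rw [hg, map_sum, hY]
  exact ⟨g', fun z => (hg' _).trans (hg z)⟩

/-- The quotient map to `P_n` as a Lie homomorphism. -/
noncomputable def pHom (n : ℕ) : FreeLieAlgebra ℚ (PGen n) →ₗ⁅ℚ⁆ PAlg n := qmk (pIdeal n)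

theorem pHom_rel (n : ℕ) {z} (hz : z ∈ pRel n) : pHom n z = 0 := qmk_eq_zero (pRel n) hz

theorem exists_pLift {L' : Type*} [LieRing L'] [LieAlgebra ℚ L'] (n : ℕ)
    (f : FreeLieAlgebra ℚ (PGen n) →ₗ⁅ℚ⁆ L') (h : ∀ z ∈ pRel n, f z = 0) :
    ∃ g : PAlg n →ₗ⁅ℚ⁆ L', ∀ z, g (pHom n z) = f z := exists_qlift (pRel n) f h

/-- relations in `t̄` -/
theorem bar_rels (n : ℕ) (A B : Fin n → t1Bar n) (hA : A = fun i => barHom n (genX i))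
    (hB : B = fun i => barHom n (genY i)) :
    (∀ i j h, barHom n (genT i j h) = ⁅A i, B j⁆) ∧
    (∀ i j, ⁅A i, A j⁆ = 0) ∧ (∀ i j, ⁅B i, B j⁆ = 0) ∧
    (∀ i j, ⁅A i, B j⁆ = ⁅A j, B i⁆) ∧
    (∀ i j k, i ≠ j → k ≠ i → k ≠ j → ⁅A k, ⁅A i, B j⁆⁆ = 0) ∧
    (∀ i j k, i ≠ j → k ≠ i → k ≠ j → ⁅B k, ⁅A i, B j⁆⁆ = 0) ∧
    (∀ i j, i ≠ j → ⁅A i + A j, ⁅A i, B j⁆⁆ = 0) ∧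
    (∀ i j, i ≠ j → ⁅B i + B j, ⁅A i, B j⁆⁆ = 0) := by
  subst hA hB
  have hT : ∀ i j h, barHom n (genT i j h) = ⁅barHom n (genX i), barHom n (genY j)⁆ := by
    intro i j h
    have := barHom_rel n (z := genT i j h - ⁅genX i, genY j⁆)
      (by simp only [t1Rel, Set.mem_union]; iterate 9 left
          right; exact ⟨i, j, h, rfl⟩)
    rwa [map_sub, LieHom.map_lie, sub_eq_zero] at this
  refine ⟨hT, ?_, ?_, ?_, ?_, ?_, ?_, ?_⟩
  · intro i j
    by_cases h : i = j
    · subst h; simp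
    rw [← LieHom.map_lie]
    apply barHom_rel
    simp only [t1Rel, Set.mem_union]; iterate 8 left
    right; exact ⟨i, j, h, rfl⟩
  · intro i j
    by_cases h : i = j
    · subst h; simp
    rw [← LieHom.map_lie]
    apply barHom_rel
    simp only [t1Rel, Set.mem_union]; iterate 7 left
    right; exact ⟨i, j, h, rfl⟩
  · intro i j
    by_cases h : i = j
    · subst h; rfl
    rw [← hT i j h, ← hT j i (Ne.symm h), ← sub_eq_zero, ← map_sub]
    apply barHom_rel
    simp only [t1Rel, Set.mem_union]; iterate 10 left
    exact ⟨i, j, h, rfl⟩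
  · intro i j k h h1 h2
    rw [← hT i j h, ← LieHom.map_lie]
    apply barHom_rel
    simp only [t1Rel, Set.mem_union]; iterate 3 left
    right; exact ⟨k, i, j, h, h1, h2, rfl⟩
  · intro i j k h h1 h2
    rw [← hT i j h, ← LieHom.map_lie]
    apply barHom_rel
    simp only [t1Rel, Set.mem_union]; iterate 2 left
    right; exact ⟨k, i, j, h, h1, h2, rfl⟩
  · intro i j h
    rw [← hT i j h, ← map_add, ← LieHom.map_lie]
    apply barHom_rel
    simp only [t1Rel, Set.mem_union]; left
    right; exact ⟨i, j, h, rfl⟩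
  · intro i j h
    rw [← hT i j h, ← map_add, ← LieHom.map_lie]
    apply barHom_rel
    simp only [t1Rel, Set.mem_union]
    right; exact ⟨i, j, h, rfl⟩

/-- relations in `P_n` -/
theorem p_rels (n : ℕ) (x y : Fin n → PAlg n) (hx : x = fun i => pHom n (pX i))
    (hy : y = fun i => pHom n (pY i)) :
    (∀ i j, ⁅x i, x j⁆ = 0) ∧ (∀ i j, ⁅y i, y j⁆ = 0) ∧
    (∀ i j, ⁅x i, y j⁆ = ⁅x j, y i⁆) ∧
    (∀ i j k, i ≠ j → k ≠ i → k ≠ j → ⁅x k, ⁅x i, y j⁆⁆ = 0) ∧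
    (∀ i j k, i ≠ j → k ≠ i → k ≠ j → ⁅y k, ⁅y i, x j⁆⁆ = 0) ∧
    (∀ i j, i ≠ j → ⁅x i + x j, ⁅x i, y j⁆⁆ = 0) ∧
    (∀ i j, i ≠ j → ⁅y i + y j, ⁅y i, x j⁆⁆ = 0) := by
  have r1 : ∀ i j, i < j → ⁅x i, x j⁆ = 0 := by
    intro i j h
    have := pHom_rel n (z := ⁅pX i, pX j⁆)
      (by simp only [pRel, Set.mem_union]; iterate 6 left
          exact ⟨i, j, h, rfl⟩)
    simpa only [LieHom.map_lie, map_add, map_sub, hx, hy] using this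
  have r2 : ∀ i j, i < j → ⁅y i, y j⁆ = 0 := by
    intro i j h
    have := pHom_rel n (z := ⁅pY i, pY j⁆)
      (by simp only [pRel, Set.mem_union]; iterate 5 left
          right; exact ⟨i, j, h, rfl⟩)
    simpa only [LieHom.map_lie, map_add, map_sub, hx, hy] using this
  have r3 : ∀ i j, i < j → ⁅x i, y j⁆ = ⁅x j, y i⁆ := by
    intro i j h
    have := pHom_rel n (z := ⁅pX i, pY j⁆ - ⁅pX j, pY i⁆)
      (by simp only [pRel, Set.mem_union]; iterate 4 left
          right; exact ⟨i, j, h, rfl⟩)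
    rw [← sub_eq_zero]
    simpa only [LieHom.map_lie, map_add, map_sub, hx, hy] using this
  have r4 : ∀ i j, i < j → ⁅⁅x j, y i⁆, y i + y j⁆ = 0 := by
    intro i j h
    have := pHom_rel n (z := ⁅⁅pX j, pY i⁆, pY i + pY j⁆)
      (by simp only [pRel, Set.mem_union]; iterate 3 left
          right; exact ⟨i, j, h, rfl⟩)
    simpa only [LieHom.map_lie, map_add, map_sub, hx, hy] using this
  have r5 : ∀ i j, i < j → ⁅x j + x i, ⁅y i, x j⁆⁆ = 0 := by
    intro i j h
    have := pHom_rel n (z := ⁅pX j + pX i, ⁅pY i, pX j⁆⁆)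
      (by simp only [pRel, Set.mem_union]; iterate 2 left
          right; exact ⟨i, j, h, rfl⟩)
    simpa only [LieHom.map_lie, map_add, map_sub, hx, hy] using this
  have r6 : ∀ i j k, i < j → j < k → ⁅y k, ⁅y i, x j⁆⁆ = 0 := by
    intro i j k h h'
    have := pHom_rel n (z := ⁅pY k, ⁅pY i, pX j⁆⁆)
      (by simp only [pRel, Set.mem_union]; iterate 1 left
          right; exact ⟨i, j, k, h, h', rfl⟩)
    simpa only [LieHom.map_lie, map_add, map_sub, hx, hy] using this
  have r7 : ∀ i j k, i < j → j < k → ⁅x k, ⁅y i, x j⁆⁆ = 0 := by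
    intro i j k h h'
    have := pHom_rel n (z := ⁅pX k, ⁅pY i, pX j⁆⁆)
      (by simp only [pRel, Set.mem_union]
          right; exact ⟨i, j, k, h, h', rfl⟩)
    simpa only [LieHom.map_lie, map_add, map_sub, hx, hy] using this
  clear hx hy
  have q1 : ∀ i j, ⁅x i, x j⁆ = 0 := by
    intro i j
    rcases lt_trichotomy i j with h | rfl | h
    · exact r1 i j h
    · exact lie_self _
    · rw [← lie_skew, r1 j i h, neg_zero]
  have q2 : ∀ i j, ⁅y i, y j⁆ = 0 := by
    intro i j
    rcases lt_trichotomy i j with h | rfl | h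
    · exact r2 i j h
    · exact lie_self _
    · rw [← lie_skew, r2 j i h, neg_zero]
  have q3 : ∀ i j, ⁅x i, y j⁆ = ⁅x j, y i⁆ := by
    intro i j
    rcases lt_trichotomy i j with h | rfl | h
    · exact r3 i j h
    · rfl
    · exact (r3 j i h).symm
  have q3' : ∀ i j, ⁅y i, x j⁆ = ⁅y j, x i⁆ := by
    intro i j
    rw [← lie_skew, q3, lie_skew]
  refine ⟨q1, q2, q3, sorted_A q1 q3 ?_, sorted_A q2 q3' r6, ?_, ?_⟩
  · intro i j k h h'
    rw [q3, ← lie_skew (x j), lie_neg, r7 i j k h h', neg_zero]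
  · intro i j hij
    rcases lt_or_gt_of_ne hij with h | h
    · rw [q3, ← lie_skew (x j), lie_neg, add_comm, r5 i j h, neg_zero]
    · rw [← lie_skew (x i), lie_neg, r5 j i h, neg_zero]
  · intro i j hij
    rcases lt_or_gt_of_ne hij with h | h
    · rw [← lie_skew, ← lie_skew (y i), neg_lie, neg_neg, r4 i j h]
    · rw [q3', ← lie_skew, ← lie_skew (y j), neg_lie, neg_neg, add_comm, r4 j i h]

end Homs

/-- the assignment `X_i ↦ X_i`, `Y_i ↦ Y_i` (indices viewed among the
`n+1` indices of `t̄_{1,n+1}`) determines a well-defined Lie algebra homomorphism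
`P_n → t̄_{1,n+1}` which is an isomorphism; i.e. `t̄_{1,n+1}` admits the presentation `P_n`. -/
theorem stmt_18 (n : ℕ) (hn : 1 ≤ n) :
    ∃ φ : PAlg n →ₗ⁅ℚ⁆ t1Bar (n + 1),
      (∀ i : Fin n, φ (pMk n (pX i)) = t1BarMk (n + 1) (genX i.castSucc)) ∧
      (∀ i : Fin n, φ (pMk n (pY i)) = t1BarMk (n + 1) (genY i.castSucc)) ∧
      Function.Bijective φ := by
  -- the map out of `P_n`
  obtain ⟨hT, a1, a2, a3, a4, a5, a6, a7⟩ := bar_rels (n + 1) _ _ rfl rfl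
  obtain ⟨φ, hφ⟩ := exists_pLift n
    (FreeLieAlgebra.lift ℚ (Sum.elim (fun i : Fin n => barHom (n + 1) (genX i.castSucc))
      (fun i : Fin n => barHom (n + 1) (genY i.castSucc)))) (by
    set F := FreeLieAlgebra.lift ℚ
      (Sum.elim (fun i : Fin n => barHom (n + 1) (genX i.castSucc))
      (fun i : Fin n => barHom (n + 1) (genY i.castSucc))) with hF
    have fX : ∀ i, F (pX i) = barHom (n + 1) (genX i.castSucc) := fun i => by simp [hF, pX]
    have fY : ∀ i, F (pY i) = barHom (n + 1) (genY i.castSucc) := fun i => by simp [hF, pY]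
    have ne : ∀ {i j : Fin n}, i < j → i.castSucc ≠ j.castSucc := fun h => by
      simpa using h.ne
    have skw : ∀ i j, ⁅barHom (n + 1) (genY i), barHom (n + 1) (genX j)⁆ =
        -⁅barHom (n + 1) (genX j), barHom (n + 1) (genY i)⁆ := fun i j => (lie_skew _ _).symm
    rintro z ((((((⟨i, j, h, rfl⟩ | ⟨i, j, h, rfl⟩) | ⟨i, j, h, rfl⟩) | ⟨i, j, h, rfl⟩) |
      ⟨i, j, h, rfl⟩) | ⟨i, j, k, h, h', rfl⟩) | ⟨i, j, k, h, h', rfl⟩) <;>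
      simp only [LieHom.map_lie, map_add, map_sub, fX, fY]
    · exact a1 _ _
    · exact a2 _ _
    · exact sub_eq_zero.2 (a3 _ _)
    · rw [← lie_skew, add_comm (barHom (n + 1) (genY i.castSucc)), a7 _ _ (ne h).symm, neg_zero]
    · rw [skw, lie_neg, a6 _ _ (ne h).symm, neg_zero]
    · rw [skw, lie_neg, a5 _ _ _ (ne h).symm (ne h').symm (ne (h.trans h')).symm, neg_zero]
    · rw [skw, lie_neg, a4 _ _ _ (ne h).symm (ne h').symm (ne (h.trans h')).symm, neg_zero])
  have φX : ∀ i, φ (pHom n (pX i)) = barHom (n + 1) (genX i.castSucc) := fun i => by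
    rw [hφ]; simp [pX]
  have φY : ∀ i, φ (pHom n (pY i)) = barHom (n + 1) (genY i.castSucc) := fun i => by
    rw [hφ]; simp [pY]
  -- the inverse map
  obtain ⟨x, hx⟩ : ∃ x : Fin n → PAlg n, x = fun i => pHom n (pX i) := ⟨_, rfl⟩
  obtain ⟨y, hy⟩ : ∃ y : Fin n → PAlg n, y = fun i => pHom n (pY i) := ⟨_, rfl⟩
  obtain ⟨p1, p2, p3, p4, p5, p6, p7⟩ := p_rels n x y hx hy
  obtain ⟨X, hXc, hXl⟩ : ∃ X : Fin (n + 1) → PAlg n,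
      (∀ i : Fin n, X i.castSucc = x i) ∧ X (Fin.last n) = -∑ i, x i :=
    ⟨Fin.snoc (α := fun _ => PAlg n) x (-∑ i, x i), by simp, by simp⟩
  obtain ⟨Y, hYc, hYl⟩ : ∃ Y : Fin (n + 1) → PAlg n,
      (∀ i : Fin n, Y i.castSucc = y i) ∧ Y (Fin.last n) = -∑ i, y i :=
    ⟨Fin.snoc (α := fun _ => PAlg n) y (-∑ i, y i), by simp, by simp⟩
  have p3' : ∀ i j, ⁅y i, x j⁆ = ⁅y j, x i⁆ := by
    intro i j
    rw [← lie_skew, p3, lie_skew]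
  have X0 : ∑ i, X i = 0 := by simp [Fin.sum_univ_castSucc, hXc, hXl]
  have Y0 : ∑ i, Y i = 0 := by simp [Fin.sum_univ_castSucc, hYc, hYl]
  have XX := ext_comm hXc hXl p1
  have YY := ext_comm hYc hYl p2
  have XY := ext_symm hXc hXl hYc hYl p3
  have XA := ext_A hXc hXl hYc hYl p1 p3 p4 p6
  have YA := ext_A hYc hYl hXc hXl p2 p3' p5 p7
  have XB := ext_B X0 XA
  have YB := ext_B Y0 YA
  have YA' : ∀ i j k, i ≠ j → k ≠ i → k ≠ j → ⁅Y k, ⁅X i, Y j⁆⁆ = 0 := fun i j k h h1 h2 => by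
    rw [← lie_skew (X i), lie_neg, YA j i k h.symm h2 h1, neg_zero]
  have YB' : ∀ i j, i ≠ j → ⁅Y i + Y j, ⁅X i, Y j⁆⁆ = 0 := fun i j h => by
    rw [← lie_skew (X i), lie_neg, add_comm, YB j i h.symm, neg_zero]
  obtain ⟨G, GX, GY, GT⟩ : ∃ G : FreeLieAlgebra ℚ (ElGen (n + 1)) →ₗ⁅ℚ⁆ PAlg n,
      (∀ i, G (genX i) = X i) ∧ (∀ i, G (genY i) = Y i) ∧
      (∀ i j h, G (genT i j h) = ⁅X i, Y j⁆) :=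
    ⟨FreeLieAlgebra.lift ℚ (Sum.elim X (Sum.elim Y (fun p => ⁅X p.1.1, Y p.1.2⁆))),
      fun i => by simp [genX], fun i => by simp [genY], fun i j h => by simp [genT]⟩
  obtain ⟨ψ, hψ⟩ := exists_barLift (n + 1) G (by
    rintro z ((((((((((⟨i, j, h, rfl⟩ | ⟨i, j, h, rfl⟩) | ⟨i, j, h, rfl⟩) | ⟨i, j, h, rfl⟩) |
      ⟨i, rfl⟩) | ⟨i, j, k, h, h1, h2, rfl⟩) | ⟨i, j, k, l, h, h', h1, h2, h3, h4, rfl⟩) |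
      ⟨i, j, k, h, h1, h2, rfl⟩) | ⟨i, j, k, h, h1, h2, rfl⟩) | ⟨i, j, h, rfl⟩) |
      ⟨i, j, h, rfl⟩) <;>
      simp only [LieHom.map_lie, map_add, map_sub, GX, GY, GT]
    · exact sub_eq_zero.2 (XY _ _)
    · exact sub_self _
    · exact XX _ _
    · exact YY _ _
    · have e : ∀ j, G (if h : i ≠ j then genT i j h else 0) =
          ⁅X i, Y j⁆ - if j = i then ⁅X i, Y i⁆ else 0 := by
        intro j
        by_cases h : i = j
        · subst h; simp
        · rw [dif_pos h, GT, if_neg (Ne.symm h), sub_zero]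
      rw [map_sum, Finset.sum_congr rfl (fun j _ => e j), Finset.sum_sub_distrib, ← lie_sum, Y0]
      simp [-lie_skew]
    · rw [← add_lie, leibniz_lie, ← lie_skew _ (X i + X j), XB i j h, neg_zero, zero_lie, zero_add,
        ← lie_skew _ (Y k), YA' i j k h h1.symm h2.symm]
      simp
    · rw [lie_lie, XA _ _ _ h' h1 h2, YA' _ _ _ h' h3 h4, lie_zero, lie_zero, sub_zero]
    · exact XA _ _ _ h h1 h2
    · exact YA' _ _ _ h h1 h2
    · exact XB _ _ h
    · exact YB' _ _ h)
    (by simpa only [GX] using X0) (by simpa only [GY] using Y0)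
  have left : ∀ a, ψ (φ a) = a := by
    intro a
    obtain ⟨z, rfl⟩ : ∃ z, pHom n z = a := qmk_surj _ a
    have : (ψ.comp φ).comp (pHom n) = pHom n := by
      apply FreeLieAlgebra.hom_ext
      rintro (i | i)
      · change ψ (φ (pHom n (pX i))) = pHom n (pX i)
        rw [φX, hψ, GX, hXc, hx]
      · change ψ (φ (pHom n (pY i))) = pHom n (pY i)
        rw [φY, hψ, GY, hYc, hy]
    exact LieHom.congr_fun this z
  have eX : ∀ i, φ (X i) = barHom (n + 1) (genX i) := by
    have hc : ∀ i : Fin n, φ (X i.castSucc) = barHom (n + 1) (genX i.castSucc) := fun i => by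
      rw [hXc, hx, φX]
    intro i
    induction i using Fin.lastCases with
    | cast i => exact hc i
    | last =>
      have h := barHom_sumX (n + 1)
      have h' := congrArg φ X0
      rw [map_sum, map_zero, Fin.sum_univ_castSucc, Finset.sum_congr rfl fun i _ => hc i] at h'
      rw [Fin.sum_univ_castSucc] at h
      exact add_left_cancel (h'.trans h.symm)
  have eY : ∀ i, φ (Y i) = barHom (n + 1) (genY i) := by
    have hc : ∀ i : Fin n, φ (Y i.castSucc) = barHom (n + 1) (genY i.castSucc) := fun i => by
      rw [hYc, hy, φY]
    intro i
    induction i using Fin.lastCases with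
    | cast i => exact hc i
    | last =>
      have h := barHom_sumY (n + 1)
      have h' := congrArg φ Y0
      rw [map_sum, map_zero, Fin.sum_univ_castSucc, Finset.sum_congr rfl fun i _ => hc i] at h'
      rw [Fin.sum_univ_castSucc] at h
      exact add_left_cancel (h'.trans h.symm)
  have right : ∀ a, φ (ψ a) = a := by
    intro a
    obtain ⟨z, rfl⟩ := barHom_surj _ a
    have : (φ.comp ψ).comp (barHom (n + 1)) = barHom (n + 1) := by
      apply FreeLieAlgebra.hom_ext
      rintro (i | i | ⟨⟨i, j⟩, h⟩)
      · change φ (ψ (barHom (n + 1) (genX i))) = barHom (n + 1) (genX i)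
        rw [hψ, GX, eX]
      · change φ (ψ (barHom (n + 1) (genY i))) = barHom (n + 1) (genY i)
        rw [hψ, GY, eY]
      · change φ (ψ (barHom (n + 1) (genT i j h))) = barHom (n + 1) (genT i j h)
        rw [hψ, GT, hT, LieHom.map_lie, eX, eY]
    exact LieHom.congr_fun this z
  exact ⟨φ, φX, φY, Function.bijective_iff_has_inverse.2 ⟨ψ, left, right⟩⟩
end
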